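/- Let a_1, …, a_n (weights) and α_1, …, α_r (positive roots) be linear functionals on ℝ^m and c_1, …, c_n real constants, and assume the conical condition: for every nonzero β ∈ ℝ^m, Σ_{j=1}^{n} |a_j(β)| > 2 Σ_{k=1}^{r} |α_k(β)|. Then for every polynomial function R on ℝ^m with complex coefficients and every linear functional ζ on ℝ^m, the function σ ↦ e^{2πi ζ(σ)} R(σ) · ∏_{k=1}^{r} ((1/π) sinh(π α_k(σ)))² · ∏_{j=1}^{n} (π / cosh(π(a_j(σ) + c_j))) is integrable on ℝ^m. (This is the convergence of the integral defining the twisted trace on the quantized Coulomb branch in the paper's main theorem.) -/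

import Mathlib

/-!
The integrand is continuous, so it suffices to dominate it by an integrable function.
By compactness of the unit sphere the conical condition holds with a uniform gap:
`δ ‖β‖ + 2 ∑ |α_k β| ≤ ∑ |a_j β|` for some `δ > 0` (`exists_conical_gap`). Since
`((1/π) sinh (π x))² ≤ exp (2π|x|)` and `π / cosh (π (x + c))` is at most a constant times
`exp (-π|x|)`, the hyperbolic factors are together `O(exp (-πδ‖σ‖))`. The polynomial has
polynomial growth (`exists_norm_eval_le`), and polynomial growth times exponential decay is
`O((1 + ‖σ‖)^(-(m+1)))`, which is integrable on `ℝ^m`.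
-/

open Complex Real MeasureTheory

/-- The conical condition, strict at every nonzero vector, holds with a gap linear in the norm. -/
lemma exists_conical_gap {m n r : ℕ}
    (a : Fin n → (EuclideanSpace ℝ (Fin m) →ₗ[ℝ] ℝ))
    (α : Fin r → (EuclideanSpace ℝ (Fin m) →ₗ[ℝ] ℝ))
    (hconical : ∀ β : EuclideanSpace ℝ (Fin m), β ≠ 0 →
      2 * ∑ k : Fin r, |α k β| < ∑ j : Fin n, |a j β|) :
    ∃ δ : ℝ, 0 < δ ∧ ∀ β : EuclideanSpace ℝ (Fin m),
      δ * ‖β‖ ≤ ∑ j, |a j β| - 2 * ∑ k, |α k β| := by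
  have ha : ∀ j, Continuous (a j) := fun j => (a j).continuous_of_finiteDimensional
  have hα : ∀ k, Continuous (α k) := fun k => (α k).continuous_of_finiteDimensional
  have hcont : Continuous fun β : EuclideanSpace ℝ (Fin m) =>
      ∑ j, |a j β| - 2 * ∑ k, |α k β| := by fun_prop
  have hpos : ∀ β ∈ Metric.sphere (0 : EuclideanSpace ℝ (Fin m)) 1,
      0 < ∑ j, |a j β| - 2 * ∑ k, |α k β| := by
    intro β hβ
    have hne : β ≠ 0 := by
      rintro rfl
      simp at hβ
    linarith [hconical β hne]
  obtain ⟨δ, hδ, hle⟩ := (isCompact_sphere (0 : EuclideanSpace ℝ (Fin m)) 1).exists_forall_le'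
    hcont.continuousOn hpos
  refine ⟨δ, hδ, fun β => ?_⟩
  by_cases hβ : β = 0
  · simp [hβ]
  have hn : 0 < ‖β‖ := norm_pos_iff.mpr hβ
  have h := hle (‖β‖⁻¹ • β) (by simp [norm_smul, hn.ne'])
  simp only [map_smul, smul_eq_mul, abs_mul, abs_inv, abs_norm, ← Finset.mul_sum] at h
  have h' : δ * ‖β‖ ≤ (‖β‖⁻¹ * ∑ j, |a j β| - 2 * (‖β‖⁻¹ * ∑ k, |α k β|)) * ‖β‖ :=
    mul_le_mul_of_nonneg_right h hn.le
  convert h' using 1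
  field_simp

lemma exists_norm_eval_le {m : ℕ} (R : MvPolynomial (Fin m) ℂ) :
    ∃ (C : ℝ) (N : ℕ), 0 ≤ C ∧ ∀ σ : EuclideanSpace ℝ (Fin m),
      ‖MvPolynomial.eval (fun i => ((σ i : ℝ) : ℂ)) R‖ ≤ C * (1 + ‖σ‖) ^ N := by
  induction R using MvPolynomial.induction_on with
  | C z => exact ⟨‖z‖, 0, norm_nonneg z, by simp⟩
  | add p q hp hq =>
    obtain ⟨C, N, hC, hp⟩ := hp
    obtain ⟨D, M, hD, hq⟩ := hq
    refine ⟨C + D, N + M, by positivity, fun σ => ?_⟩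
    have h1 : 1 ≤ 1 + ‖σ‖ := by linarith [norm_nonneg σ]
    rw [map_add, add_mul]
    refine (norm_add_le _ _).trans (add_le_add ((hp σ).trans ?_) ((hq σ).trans ?_))
    · gcongr
      omega
    · gcongr
      omega
  | mul_X p i hp =>
    obtain ⟨C, N, hC, hp⟩ := hp
    refine ⟨C, N + 1, hC, fun σ => ?_⟩
    rw [map_mul, norm_mul, pow_succ, ← mul_assoc, MvPolynomial.eval_X, Complex.norm_real]
    have hi : ‖σ i‖ ≤ 1 + ‖σ‖ := by linarith [PiLp.norm_apply_le σ i]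
    exact mul_le_mul (hp σ) hi (norm_nonneg _) (by positivity)

lemma norm_sinh_factor_le (x : ℝ) :
    ‖(((1 / Real.pi * Real.sinh (Real.pi * x) : ℝ) : ℂ)) ^ 2‖
      ≤ Real.exp (Real.pi * (2 * |x|)) := by
  have hs : |Real.sinh (Real.pi * x)| ≤ Real.exp (Real.pi * |x|) := by
    rw [Real.abs_sinh, abs_mul, abs_of_pos Real.pi_pos, Real.sinh_eq]
    have h1 := Real.exp_pos (Real.pi * |x|)
    have h2 := Real.exp_pos (-(Real.pi * |x|))
    linarith
  have hpi : |1 / Real.pi| ≤ 1 := by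
    rw [abs_of_pos (by positivity), div_le_one Real.pi_pos]
    linarith [Real.pi_gt_three]
  rw [norm_pow, Complex.norm_real, Real.norm_eq_abs, abs_mul]
  have hb : |1 / Real.pi| * |Real.sinh (Real.pi * x)| ≤ Real.exp (Real.pi * |x|) := by
    simpa using mul_le_mul hpi hs (abs_nonneg _) zero_le_one
  calc _ ≤ Real.exp (Real.pi * |x|) ^ 2 := by gcongr
    _ = _ := by rw [← Real.exp_nat_mul]; congr 1; push_cast; ring

lemma norm_cosh_factor_le (x c : ℝ) :
    ‖(Real.pi : ℂ) / ((Real.cosh (Real.pi * (x + c)) : ℝ) : ℂ)‖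
      ≤ (2 * Real.pi * Real.exp (Real.pi * |c|)) * Real.exp (-(Real.pi * |x|)) := by
  rw [norm_div, Complex.norm_real, Complex.norm_real, Real.norm_eq_abs, Real.norm_eq_abs,
    abs_of_pos Real.pi_pos, abs_of_pos (Real.cosh_pos _), div_le_iff₀ (Real.cosh_pos _)]
  have hc : Real.exp (Real.pi * |x + c|) ≤ 2 * Real.cosh (Real.pi * (x + c)) := by
    rw [← Real.cosh_abs, abs_mul, abs_of_pos Real.pi_pos, Real.cosh_eq]
    linarith [Real.exp_pos (-(Real.pi * |x + c|))]
  have htri : |x| ≤ |x + c| + |c| := by simpa using abs_sub (x + c) c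
  have hone : 1 ≤ Real.exp (Real.pi * |c|) * Real.exp (-(Real.pi * |x|)) *
      Real.exp (Real.pi * |x + c|) := by
    rw [← Real.exp_add, ← Real.exp_add, Real.one_le_exp_iff]
    nlinarith [Real.pi_pos]
  calc Real.pi ≤ Real.pi * (Real.exp (Real.pi * |c|) * Real.exp (-(Real.pi * |x|)) *
        Real.exp (Real.pi * |x + c|)) := le_mul_of_one_le_right Real.pi_pos.le hone
    _ ≤ Real.pi * (Real.exp (Real.pi * |c|) * Real.exp (-(Real.pi * |x|)) *
        (2 * Real.cosh (Real.pi * (x + c)))) := by gcongr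
    _ = _ := by ring

lemma integrable_one_add_norm_pow_mul_exp (m N : ℕ) {b : ℝ} (hb : 0 < b) :
    Integrable (fun σ : EuclideanSpace ℝ (Fin m) => (1 + ‖σ‖) ^ N * Real.exp (-(b * ‖σ‖))) := by
  have hint : Integrable (fun σ : EuclideanSpace ℝ (Fin m) => (1 + ‖σ‖) ^ (-((m + 1 : ℕ) : ℝ))) :=
    integrable_one_add_norm (by simp)
  refine (hint.const_mul ((N + (m + 1)).factorial * Real.exp b / b ^ (N + (m + 1)))).mono'
    (by fun_prop) (Filter.Eventually.of_forall fun σ => ?_)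
  have hpos : 0 < 1 + ‖σ‖ := by positivity
  -- `x ^ M / M! ≤ exp x` at `x = b (1 + ‖σ‖)`, `M = N + (m + 1)`, gives the constant above.
  have h := Real.pow_div_factorial_le_exp (b * (1 + ‖σ‖)) (by positivity) (N + (m + 1))
  rw [mul_add, mul_one, Real.exp_add, div_le_iff₀ (by positivity)] at h
  rw [Real.norm_eq_abs, abs_of_pos (by positivity), Real.rpow_neg hpos.le, Real.rpow_natCast,
    Real.exp_neg, ← div_eq_mul_inv, ← div_eq_mul_inv, div_div,
    div_le_div_iff₀ (Real.exp_pos _) (by positivity)]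
  calc (1 + ‖σ‖) ^ N * (b ^ (N + (m + 1)) * (1 + ‖σ‖) ^ (m + 1))
      = (b + b * ‖σ‖) ^ (N + (m + 1)) := by
        rw [show b + b * ‖σ‖ = b * (1 + ‖σ‖) by ring, mul_pow, pow_add (1 + ‖σ‖)]; ring
    _ ≤ _ := by linarith

/-- Convergence of the integral defining the twisted trace on the quantized Coulomb
branch: under the conical condition `Σ_j |a_j(β)| > 2 Σ_k |α_k(β)|` for all `β ≠ 0`,
the function
`σ ↦ e^{2πiζ(σ)} R(σ) ∏_k ((1/π) sinh(πα_k(σ)))² ∏_j π/cosh(π(a_j(σ) + c_j))`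
is integrable on `ℝ^m`. -/
theorem stmt14 (m n r : ℕ)
    (a : Fin n → (EuclideanSpace ℝ (Fin m) →ₗ[ℝ] ℝ))
    (α : Fin r → (EuclideanSpace ℝ (Fin m) →ₗ[ℝ] ℝ))
    (c : Fin n → ℝ)
    (hconical : ∀ β : EuclideanSpace ℝ (Fin m), β ≠ 0 →
      2 * ∑ k : Fin r, |α k β| < ∑ j : Fin n, |a j β|)
    (R : MvPolynomial (Fin m) ℂ)
    (ζ : EuclideanSpace ℝ (Fin m) →ₗ[ℝ] ℝ) :
    MeasureTheory.Integrable
      (fun σ : EuclideanSpace ℝ (Fin m) =>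
        Complex.exp (2 * Real.pi * Complex.I * (ζ σ)) *
          MvPolynomial.eval (fun i => ((σ i : ℝ) : ℂ)) R *
            (∏ k : Fin r, (((1 / Real.pi * Real.sinh (Real.pi * (α k σ)) : ℝ) : ℂ)) ^ 2) *
              ∏ j : Fin n, ((Real.pi : ℂ) / ((Real.cosh (Real.pi * (a j σ + c j)) : ℝ) : ℂ)))
      (MeasureTheory.volume : MeasureTheory.Measure (EuclideanSpace ℝ (Fin m))) := by
  obtain ⟨δ, hδ, hgap⟩ := exists_conical_gap a α hconical
  obtain ⟨C, N, hC, hR⟩ := exists_norm_eval_le R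
  have ha : ∀ j, Continuous (a j) := fun j => (a j).continuous_of_finiteDimensional
  have hα : ∀ k, Continuous (α k) := fun k => (α k).continuous_of_finiteDimensional
  have hζ : Continuous ζ := ζ.continuous_of_finiteDimensional
  have hcoord : Continuous fun σ : EuclideanSpace ℝ (Fin m) => fun i => ((σ i : ℝ) : ℂ) := by
    fun_prop
  have hRc : Continuous fun σ : EuclideanSpace ℝ (Fin m) =>
      MvPolynomial.eval (fun i => ((σ i : ℝ) : ℂ)) R :=
    (MvPolynomial.continuous_eval R).comp hcoord
  have hcosh : ∀ j, Continuous fun σ : EuclideanSpace ℝ (Fin m) =>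
      (Real.pi : ℂ) / ((Real.cosh (Real.pi * (a j σ + c j)) : ℝ) : ℂ) := fun j =>
    continuous_const.div (by fun_prop)
      fun σ => Complex.ofReal_ne_zero.mpr (Real.cosh_pos _).ne'
  set K : ℝ := ∏ j, (2 * Real.pi * Real.exp (Real.pi * |c j|)) with hK
  have hKpos : 0 < K := Finset.prod_pos fun j _ => by positivity
  refine ((integrable_one_add_norm_pow_mul_exp m N (mul_pos Real.pi_pos hδ)).const_mul
    (C * K)).mono' (Continuous.aestronglyMeasurable (by fun_prop))
    (Filter.Eventually.of_forall fun σ => ?_)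
  have hexp : ‖Complex.exp (2 * Real.pi * Complex.I * (ζ σ))‖ = 1 := by
    simp [Complex.norm_exp]
  have hsinh := Finset.prod_le_prod (s := Finset.univ) (fun k _ => norm_nonneg _)
    fun k _ => norm_sinh_factor_le (α k σ)
  have hcosh' := Finset.prod_le_prod (s := Finset.univ) (fun j _ => norm_nonneg _)
    fun j _ => norm_cosh_factor_le (a j σ) (c j)
  rw [← Real.exp_sum] at hsinh
  rw [Finset.prod_mul_distrib, ← Real.exp_sum, ← hK] at hcosh'
  rw [norm_mul, norm_mul, norm_mul, hexp, one_mul, norm_prod, norm_prod]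
  have hdecay : Real.exp (∑ k, Real.pi * (2 * |α k σ|)) * Real.exp (∑ j, -(Real.pi * |a j σ|))
      ≤ Real.exp (-(Real.pi * δ * ‖σ‖)) := by
    rw [← Real.exp_add, Real.exp_le_exp, Finset.sum_neg_distrib, ← Finset.mul_sum,
      ← Finset.mul_sum, ← Finset.mul_sum]
    nlinarith [mul_le_mul_of_nonneg_left (hgap σ) Real.pi_pos.le]
  calc _ ≤ (C * (1 + ‖σ‖) ^ N) * Real.exp (∑ k, Real.pi * (2 * |α k σ|)) *
        (K * Real.exp (∑ j, -(Real.pi * |a j σ|))) := by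
        refine mul_le_mul (mul_le_mul (hR σ) hsinh ?_ (by positivity)) hcosh' ?_ (by positivity)
        · exact Finset.prod_nonneg fun _ _ => norm_nonneg _
        · exact Finset.prod_nonneg fun _ _ => norm_nonneg _
    _ = (C * K * (1 + ‖σ‖) ^ N) * (Real.exp (∑ k, Real.pi * (2 * |α k σ|)) *
        Real.exp (∑ j, -(Real.pi * |a j σ|))) := by ring
    _ ≤ (C * K * (1 + ‖σ‖) ^ N) * Real.exp (-(Real.pi * δ * ‖σ‖)) := by gcongr
    _ = _ := by ring
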